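/- A finite semigroup S is aperiodic if and only if S ∈ SL^k for some k ≥ 1. -/

import Mathlib

open Pointwise

/-- A semigroup `S` *divides* a semigroup `T` if `S` is a homomorphic image of a
subsemigroup of `T`. -/
def Divides (S : Type) [Mul S] (T : Type) [Mul T] : Prop :=
  ∃ (U : Subsemigroup T) (f : U →ₙ* S), Function.Surjective f

/-- A semilattice: a commutative semigroup in which every element is idempotent. -/
def IsSemilattice (S : Type) [Mul S] : Prop :=
  (∀ a b : S, a * b = b * a) ∧ ∀ a : S, a * a = a

/-- The data of a two-sided semidirect product `S ⋈ T`: a left action and a right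
action of `T` on `S` satisfying the usual axioms. -/
structure BowtieData (S T : Type) [Semigroup S] [Semigroup T] where
  lact : T → S → S
  ract : S → T → S
  lact_mul : ∀ t s s', lact t (s * s') = lact t s * lact t s'
  mul_ract : ∀ s s' t, ract (s * s') t = ract s t * ract s' t
  mul_lact : ∀ t t' s, lact (t * t') s = lact t (lact t' s)
  ract_mul : ∀ s t t', ract s (t * t') = ract (ract s t) t'
  lact_ract : ∀ t s t', ract (lact t s) t' = lact t (ract s t')

/-- The underlying set of the two-sided semidirect product `S ⋈ T`. -/
structure Bowtie {S T : Type} [Semigroup S] [Semigroup T] (d : BowtieData S T) where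
  fst : S
  snd : T

instance {S T : Type} [Semigroup S] [Semigroup T] (d : BowtieData S T) :
    Mul (Bowtie d) :=
  ⟨fun a b => ⟨d.ract a.fst b.snd * d.lact a.snd b.fst, a.snd * b.snd⟩⟩

theorem Bowtie.mul_def {S T : Type} [Semigroup S] [Semigroup T] {d : BowtieData S T}
    (a b : Bowtie d) :
    a * b = ⟨d.ract a.fst b.snd * d.lact a.snd b.fst, a.snd * b.snd⟩ := rfl

/-- The two-sided semidirect product is a semigroup. -/
instance {S T : Type} [Semigroup S] [Semigroup T] (d : BowtieData S T) :
    Semigroup (Bowtie d) where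
  mul_assoc a b c := by
    simp only [Bowtie.mul_def, Bowtie.mk.injEq]
    exact ⟨by simp only [d.mul_ract, d.mul_lact, d.ract_mul, d.lact_mul, d.lact_ract,
      mul_assoc], mul_assoc _ _ _⟩

instance {S T : Type} [Semigroup S] [Semigroup T] [Finite S] [Finite T]
    (d : BowtieData S T) : Finite (Bowtie d) :=
  Finite.of_surjective (fun p : S × T => Bowtie.mk p.1 p.2) fun b => ⟨(b.fst, b.snd), rfl⟩
/-- A bundled finite semigroup. -/
structure FinSgr where
  carrier : Type
  str : Semigroup carrier
  fin : Finite carrier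

attribute [instance] FinSgr.str FinSgr.fin

/-- The classes `SL^k` of finite semigroups: `SL^1` is the class of finite semilattices,
and `SL^(k+1)` is the class of finite semigroups dividing some two-sided semidirect
product `A ⋈ B` with `A` a finite semilattice and `B ∈ SL^k`.  (`SL^0` is empty.) -/
def SL : ℕ → FinSgr → Prop
  | 0, _ => False
  | 1, T => IsSemilattice T.carrier
  | (k+2), T =>
      ∃ (A B : FinSgr) (d : BowtieData A.carrier B.carrier),
        IsSemilattice A.carrier ∧ SL (k+1) B ∧ Divides T.carrier (Bowtie d)

/-- Membership of a finite semigroup in the class `SL^k`. -/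
def MemSL (k : ℕ) (S : Type) [Semigroup S] [Finite S] : Prop :=
  SL k ⟨S, inferInstance, inferInstance⟩
/-- The `n`-th power of an element of a semigroup, for `n ≥ 1` (with the junk value
`sgPow t 0 = t`). -/
def sgPow {T : Type} [Mul T] (t : T) : ℕ → T
  | 0 => t
  | 1 => t
  | (n+2) => sgPow t (n+1) * t

/-- A semigroup is aperiodic if for every element `t` there is `n ≥ 1` with
`t^(n+1) = t^n`. -/
def IsAperiodic (T : Type) [Mul T] : Prop :=
  ∀ t : T, ∃ n, 1 ≤ n ∧ sgPow t (n + 1) = sgPow t n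

/-!
In a two-sided semidirect product with a semilattice, `z * x * x * z = z * x * z` as soon as the
second component of `z` absorbs that of `x` on both sides, so aperiodicity passes from `B` to
`A ⋈ B`.

For the converse, call two words congruent at rank `k + 1` if they are so at rank `k` and have the
same factorisations `p a q` around a letter, with `p` and `q` taken up to rank `k`. The set of
factorisations is multiplicative in the sense of a two-sided semidirect product, so that the
quotient of the free monoid at rank `k` lies in `SL^(k+1)`. Every homomorphism `φ` from a free
monoid to a finite aperiodic monoid `M` factors through one of these quotients, by induction on
`|M|` and on the set of letters: if `φ c ≠ 1`, cut a word at the occurrences of `c`; the blocks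
have fewer letters, so their values are determined at some rank, and their product is computed in
the local divisor of `M` at `φ c`, which is smaller than `M`.
-/

section Aperiodicity

variable {S T A B : Type} [Semigroup S] [Semigroup T] [Semigroup A] [Semigroup B]

theorem sgPow_succ (t : T) {n : ℕ} (hn : 1 ≤ n) : sgPow t (n + 1) = sgPow t n * t := by
  cases n with
  | zero => contradiction
  | succ n => rfl

theorem coe_sgPow (t : T) {n : ℕ} (hn : 1 ≤ n) :
    ((sgPow t n : T) : WithOne T) = (t : WithOne T) ^ n := by
  induction n, hn using Nat.le_induction with
  | base => exact (pow_one _).symm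
  | succ n hn ih => rw [sgPow_succ t hn, WithOne.coe_mul, ih, pow_succ]

theorem sgPow_add (t : T) {m n : ℕ} (hm : 1 ≤ m) (hn : 1 ≤ n) :
    sgPow t (m + n) = sgPow t m * sgPow t n := by
  apply WithOne.coe_injective
  rw [WithOne.coe_mul, coe_sgPow t hm, coe_sgPow t hn, coe_sgPow t (by omega), pow_add]

theorem sgPow_succ' (t : T) {n : ℕ} (hn : 1 ≤ n) : sgPow t (n + 1) = t * sgPow t n := by
  rw [add_comm, sgPow_add t le_rfl hn, sgPow]

theorem map_sgPow (f : S →ₙ* T) (s : S) (n : ℕ) : f (sgPow s n) = sgPow (f s) n := by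
  rcases Nat.eq_zero_or_pos n with rfl | hn
  · rfl
  induction n, hn using Nat.le_induction with
  | base => rfl
  | succ n hn ih => rw [sgPow_succ s hn, sgPow_succ (f s) hn, map_mul, ih]

theorem IsAperiodic.of_injective (hT : IsAperiodic T) (f : S →ₙ* T)
    (hf : Function.Injective f) : IsAperiodic S := by
  intro s
  obtain ⟨n, hn, h⟩ := hT (f s)
  exact ⟨n, hn, hf (by rw [map_sgPow, map_sgPow, h])⟩

theorem IsAperiodic.of_surjective (hS : IsAperiodic S) (f : S →ₙ* T)
    (hf : Function.Surjective f) : IsAperiodic T := by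
  intro t
  obtain ⟨s, rfl⟩ := hf t
  obtain ⟨n, hn, h⟩ := hS s
  exact ⟨n, hn, by rw [← map_sgPow, h, map_sgPow]⟩

theorem IsAperiodic.of_divides (hT : IsAperiodic T) (h : Divides S T) : IsAperiodic S := by
  obtain ⟨U, f, hf⟩ := h
  exact (hT.of_injective (MulMemClass.subtype U) Subtype.val_injective).of_surjective f hf

theorem IsSemilattice.isAperiodic (hA : IsSemilattice A) : IsAperiodic A :=
  fun a => ⟨1, le_rfl, hA.2 a⟩

/-- The projection of a two-sided semidirect product onto its right factor. -/
def Bowtie.sndHom (d : BowtieData A B) : Bowtie d →ₙ* B where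
  toFun := Bowtie.snd
  map_mul' _ _ := rfl

/-- With `z = (b, e)` and `x = (s, t)`, both sides are `(be + ese + eb, ee)` up to a repetition
of the summand `ese`. -/
theorem Bowtie.mul_mul_mul_self {d : BowtieData A B} (hA : ∀ a : A, a * a = a) {z x : Bowtie d}
    (hzx : z.snd * x.snd = z.snd) (hxz : x.snd * z.snd = z.snd) :
    z * x * x * z = z * x * z := by
  obtain ⟨b, e⟩ := z
  obtain ⟨s, t⟩ := x
  simp only at hzx hxz
  simp only [Bowtie.mul_def, d.mul_ract, d.lact_ract, ← d.ract_mul, mul_assoc, hzx, hxz]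
  simp only [← mul_assoc, Bowtie.mk.injEq, and_true]
  rw [mul_assoc (d.ract b e), hA]

theorem IsAperiodic.bowtie (hB : IsAperiodic B) (hA : ∀ a : A, a * a = a)
    (d : BowtieData A B) : IsAperiodic (Bowtie d) := by
  intro x
  obtain ⟨n, hn, h⟩ := hB x.snd
  have hsnd : (sgPow x n).snd = sgPow x.snd n := map_sgPow (Bowtie.sndHom d) x n
  have hzx : (sgPow x n).snd * x.snd = (sgPow x n).snd := by rw [hsnd, ← sgPow_succ _ hn, h]
  have hxz : x.snd * (sgPow x n).snd = (sgPow x n).snd := by rw [hsnd, ← sgPow_succ' _ hn, h]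
  refine ⟨n + 1 + n, by omega, ?_⟩
  calc sgPow x (n + 1 + n + 1)
      = sgPow x (n + 1 + 1 + n) := by congr 1; omega
    _ = sgPow x n * x * x * sgPow x n := by
      rw [sgPow_add x (by omega) hn, sgPow_succ x (by omega), sgPow_succ x hn]
    _ = sgPow x n * x * sgPow x n := Bowtie.mul_mul_mul_self hA hzx hxz
    _ = sgPow x (n + 1 + n) := by rw [sgPow_add x (by omega) hn, sgPow_succ x hn]

theorem isAperiodic_of_SL : ∀ (k : ℕ) (T : FinSgr), SL k T → IsAperiodic T.carrier
  | 0, _, h => h.elim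
  | 1, _, h => IsSemilattice.isAperiodic h
  | k + 2, _, ⟨_, B, d, hA, hB, hd⟩ =>
    ((isAperiodic_of_SL (k + 1) B hB).bowtie hA.2 d).of_divides hd

end Aperiodicity

section Division

variable {R S T : Type}

theorem divides_of_forall_eq {W : Type*} [Mul W] [Mul S] [Mul T] (f : W →ₙ* T) (g : W →ₙ* S)
    (hg : Function.Surjective g) (h : ∀ x y, f x = f y → g x = g y) : Divides S T := by
  choose lift hlift using fun t : f.srange => t.2
  refine ⟨f.srange, ⟨fun t => g (lift t), fun t t' => ?_⟩, fun s => ?_⟩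
  · rw [← map_mul]
    apply h
    rw [hlift, map_mul, hlift, hlift, MulMemClass.coe_mul]
  · obtain ⟨w, rfl⟩ := hg s
    exact ⟨⟨f w, w, rfl⟩, h _ _ (hlift _)⟩

theorem Divides.of_injective [Mul S] [Mul T] (f : S →ₙ* T) (hf : Function.Injective f) :
    Divides S T :=
  divides_of_forall_eq f (MulHom.id S) Function.surjective_id fun _ _ h => hf h

theorem Divides.trans [Mul R] [Mul S] [Mul T] (hRS : Divides R S) (hST : Divides S T) :
    Divides R T := by
  obtain ⟨U, f, hf⟩ := hRS
  obtain ⟨V, g, hg⟩ := hST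
  refine divides_of_forall_eq
    ((MulMemClass.subtype V).comp (MulMemClass.subtype (U.comap g)))
    (f.comp (g.subsemigroupComap U)) (fun r => ?_) fun x y hxy => ?_
  · obtain ⟨⟨s, hs⟩, rfl⟩ := hf r
    obtain ⟨v, rfl⟩ := hg s
    exact ⟨⟨v, hs⟩, rfl⟩
  · rw [Subtype.ext (Subtype.ext hxy) (a1 := x) (a2 := y)]

theorem IsSemilattice.of_divides [Mul S] [Mul T] (hT : IsSemilattice T) (h : Divides S T) :
    IsSemilattice S := by
  obtain ⟨U, f, hf⟩ := h
  refine ⟨hf.forall₂.2 fun a b => ?_, hf.forall.2 fun a => ?_⟩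
  · rw [← map_mul, ← map_mul, Subtype.ext (hT.1 a b) (a1 := a * b) (a2 := b * a)]
  · rw [← map_mul, Subtype.ext (hT.2 a) (a1 := a * a) (a2 := a)]

theorem MemSL.of_divides [Semigroup S] [Finite S] [Semigroup T] [Finite T] {k : ℕ}
    (hT : MemSL k T) (h : Divides S T) : MemSL k S := by
  match k, hT with
  | 1, hT => exact IsSemilattice.of_divides hT h
  | _ + 2, ⟨A, B, d, hA, hB, hd⟩ => exact ⟨A, B, d, hA, hB, h.trans hd⟩

end Division

section Words

open FreeMonoid

variable {A : Type*} {P : Set A} {a c : A}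

theorem mul_eq_mul_of_mul_iff {u v p q : FreeMonoid A} :
    u * v = p * of a * q ↔
      (∃ r, u = p * of a * r ∧ q = r * v) ∨ ∃ r, v = r * of a * q ∧ p = u * r := by
  constructor
  · intro h
    rw [mul_assoc] at h
    obtain ⟨r, rfl, hr⟩ | ⟨r, rfl, hr⟩ := List.append_eq_append_iff.1 h
    · exact .inr ⟨ofList r, hr.trans (mul_assoc (ofList r) _ _).symm, rfl⟩
    · obtain ⟨rfl, rfl⟩ | ⟨s, rfl, rfl⟩ := List.append_eq_cons_iff.1 hr.symm
      · exact .inr ⟨1, rfl, (mul_one p).symm.trans (mul_one _).symm⟩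
      · exact .inl ⟨ofList s, (mul_assoc p (of a) (ofList s)).symm, rfl⟩
  · rintro (⟨r, rfl, rfl⟩ | ⟨r, rfl, rfl⟩) <;> simp only [mul_assoc]

theorem mem_iff_exists_eq_mul_of_mul {w : FreeMonoid A} :
    a ∈ w ↔ ∃ p q, w = p * of a * q := by
  constructor
  · intro h
    obtain ⟨p, q, hw⟩ := List.append_of_mem h
    exact ⟨ofList p, ofList q, hw.trans (mul_assoc (ofList p) (of a) (ofList q)).symm⟩
  · rintro ⟨p, q, rfl⟩
    simp [mem_mul, mem_of]

theorem exists_first_occurrence {w : FreeMonoid A} (hc : c ∈ w) :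
    ∃ p q, w = p * of c * q ∧ c ∉ p := by
  obtain ⟨p, q, rfl, hp⟩ := List.eq_append_cons_of_mem hc
  exact ⟨ofList p, ofList q, (mul_assoc (ofList p) (of c) (ofList q)).symm, hp⟩

theorem exists_last_occurrence {w : FreeMonoid A} (hc : c ∈ w) :
    ∃ p q, w = p * of c * q ∧ c ∉ q := by
  obtain ⟨q, p, hw, hq⟩ := exists_first_occurrence (w := w.reverse) (List.mem_reverse.2 hc)
  refine ⟨p.reverse, q.reverse, ?_, List.mem_reverse.not.2 hq⟩
  rw [← w.reverse_reverse, hw, reverse_mul, reverse_mul, reverse_of, mul_assoc]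

theorem induction_on_first_occurrence (c : A) {motive : FreeMonoid A → Prop}
    (w : FreeMonoid A) (free : ∀ x, c ∉ x → motive x)
    (split : ∀ x q, c ∉ x → motive q → motive (x * of c * q)) : motive w := by
  by_cases hc : c ∈ w
  · obtain ⟨x, q, rfl, hx⟩ := exists_first_occurrence hc
    exact split x q hx (induction_on_first_occurrence c q free split)
  · exact free w hc
termination_by w.length
decreasing_by simp only [*, length_mul, length_of]; omega

/-- The words all of whose letters lie in `P`. -/
def wordsOver (P : Set A) : Set (FreeMonoid A) := {w | ∀ a ∈ w, a ∈ P}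

theorem mul_of_mul_mem_wordsOver {p q : FreeMonoid A} :
    p * of c * q ∈ wordsOver P ↔ p ∈ wordsOver P ∧ c ∈ P ∧ q ∈ wordsOver P := by
  simp only [wordsOver, Set.mem_ofPred_eq, mem_mul, mem_of, or_imp, forall_and, forall_eq,
    and_assoc]

theorem mem_wordsOver_sdiff {w : FreeMonoid A} (hw : w ∈ wordsOver P)
    (hc : c ∉ w) : w ∈ wordsOver (P \ {c}) :=
  fun a ha => ⟨hw a ha, fun h => hc (h ▸ ha)⟩

theorem notMem_of_mem_wordsOver_sdiff {w : FreeMonoid A} (hw : w ∈ wordsOver (P \ {c})) : c ∉ w :=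
  fun hc => (hw c hc).2 rfl

theorem map_eq_one_of_mem_wordsOver {M : Type*} [Monoid M] {φ : FreeMonoid A →* M}
    (hP : ∀ a ∈ P, φ (of a) = 1) {w : FreeMonoid A} (hw : w ∈ wordsOver P) : φ w = 1 := by
  induction w using FreeMonoid.inductionOn' with
  | one => exact map_one φ
  | of_mul a w ih =>
    rw [map_mul, hP a (hw a (by simp)), ih fun b hb => hw b (by simp [mem_mul, hb]), mul_one]

end Words

section RankCongruence

open FreeMonoid

/-- The semilattice of subsets of `X` under union. -/
abbrev UnionSemilattice (X : Type*) := Multiplicative (SetSemiring X)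

namespace UnionSemilattice

instance (X : Type*) [Finite X] : Finite (UnionSemilattice X) :=
  inferInstanceAs (Finite (Set X))

theorem isSemilattice (X : Type) : IsSemilattice (UnionSemilattice X) :=
  ⟨mul_comm, fun s => Set.union_self s.toAdd.down⟩

/-- The homomorphism of union semilattices taking each subset to its image. -/
def image {X Y : Type*} (f : X → Y) : UnionSemilattice X →ₙ* UnionSemilattice Y where
  toFun s := .ofAdd (f '' s.toAdd.down).up
  map_mul' s t := Set.image_union f s.toAdd.down t.toAdd.down

theorem image_image {X Y Z : Type*} (g : Y → Z) (f : X → Y) (s : UnionSemilattice X) :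
    image g (image f s) = image (fun x => g (f x)) s :=
  Set.image_image g f s.toAdd.down

end UnionSemilattice

/-- The actions of `T` on the union semilattice of `T × A × T` by multiplication of the
first coordinate on the left and of the last coordinate on the right. -/
def tripleAction (A T : Type) [Semigroup T] :
    BowtieData (UnionSemilattice (T × A × T)) T where
  lact t := UnionSemilattice.image fun x => (t * x.1, x.2)
  ract s t := UnionSemilattice.image (fun x => (x.1, x.2.1, x.2.2 * t)) s
  lact_mul _ := map_mul _
  mul_ract _ _ _ := map_mul _ _ _
  mul_lact _ _ _ := by simp only [UnionSemilattice.image_image, mul_assoc]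
  ract_mul _ _ _ := by simp only [UnionSemilattice.image_image, mul_assoc]
  lact_ract _ _ _ := by simp only [UnionSemilattice.image_image]

/-- The factorisations `p a q` of a word around one of its letters, with `p` and `q` recorded
up to the congruence `c`. -/
def factorisations {A : Type*} (c : Con (FreeMonoid A)) (w : FreeMonoid A) :
    Set (c.Quotient × A × c.Quotient) :=
  {x | ∃ (p : FreeMonoid A) (a : A) (q : FreeMonoid A), w = p * of a * q ∧ x = (↑p, a, ↑q)}

theorem factorisations_subset_iff {A : Type*} {c : Con (FreeMonoid A)} {u v : FreeMonoid A} :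
    factorisations c u ⊆ factorisations c v ↔
      ∀ p a q, u = p * of a * q → ∃ p' q', v = p' * of a * q' ∧ c p p' ∧ c q q' := by
  constructor
  · intro h p a q hu
    obtain ⟨p', a', q', hv, heq⟩ := h ⟨p, a, q, hu, rfl⟩
    simp only [Prod.mk.injEq, Con.eq] at heq
    obtain ⟨hp, rfl, hq⟩ := heq
    exact ⟨p', q', hv, hp, hq⟩
  · rintro h _ ⟨p, a, q, hu, rfl⟩
    obtain ⟨p', q', hv, hp, hq⟩ := h p a q hu
    exact ⟨p', a, q', hv, by rw [c.eq.2 hp, c.eq.2 hq]⟩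

theorem factorisations_mul {A : Type*} (c : Con (FreeMonoid A)) (u v : FreeMonoid A) :
    factorisations c (u * v) =
      (fun x => (x.1, x.2.1, x.2.2 * (v : c.Quotient))) '' factorisations c u ∪
        (fun x => ((u : c.Quotient) * x.1, x.2)) '' factorisations c v := by
  ext x
  constructor
  · rintro ⟨p, a, q, h, rfl⟩
    obtain ⟨r, hu, rfl⟩ | ⟨r, hv, rfl⟩ := mul_eq_mul_of_mul_iff.1 h
    · exact .inl ⟨_, ⟨p, a, r, hu, rfl⟩, by rw [Con.coe_mul]⟩
    · exact .inr ⟨_, ⟨r, a, q, hv, rfl⟩, by rw [Con.coe_mul]⟩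
  · rintro (⟨_, ⟨p, a, q, rfl, rfl⟩, rfl⟩ | ⟨_, ⟨p, a, q, rfl, rfl⟩, rfl⟩)
    · exact ⟨p, a, q * v, by simp only [mul_assoc], rfl⟩
    · exact ⟨u * p, a, q, by simp only [mul_assoc], rfl⟩

/-- The homomorphism sending a word to its set of factorisations together with its class. -/
def factorisationHom {A : Type} (c : Con (FreeMonoid A)) :
    FreeMonoid A →ₙ* Bowtie (tripleAction A c.Quotient) where
  toFun w := ⟨.ofAdd (factorisations c w).up, w⟩
  map_mul' u v := congrArg (Bowtie.mk · _) (factorisations_mul c u v)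

/-- The congruences measuring words by Ehrenfeucht–Fraïssé rank: words are congruent at rank
`k + 1` if they are so at rank `k` and have the same factorisations `p a q` up to rank `k`. -/
def rankCon (A : Type) : ℕ → Con (FreeMonoid A)
  | 0 => ⊤
  | k + 1 => Con.ker (factorisationHom (rankCon A k))

variable {A : Type} {j k : ℕ} {u v : FreeMonoid A}

theorem rankCon_succ_iff :
    rankCon A (k + 1) u v ↔
      factorisations (rankCon A k) u = factorisations (rankCon A k) v ∧ rankCon A k u v := by
  rw [← (rankCon A k).eq]
  exact ⟨fun h => ⟨congrArg (·.fst.toAdd.down) h, congrArg (·.snd) h⟩,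
    fun ⟨hf, hc⟩ => congrArg₂ (fun s t =>
      (⟨.ofAdd (Set.up s), t⟩ : Bowtie (tripleAction A (rankCon A k).Quotient))) hf hc⟩

theorem rankCon_antitone : Antitone (rankCon A) :=
  antitone_nat_of_succ_le fun _ _ _ h => (rankCon_succ_iff.1 h).2

theorem rankCon_mono (hjk : j ≤ k) (h : rankCon A k u v) : rankCon A j u v :=
  rankCon_antitone hjk h

theorem exists_eq_mul_of_mul_of_rankCon_succ {p q : FreeMonoid A} {a : A}
    (h : rankCon A (k + 1) (p * of a * q) v) :
    ∃ p' q', v = p' * of a * q' ∧ rankCon A k p p' ∧ rankCon A k q q' :=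
  factorisations_subset_iff.1 (rankCon_succ_iff.1 h).1.subset p a q rfl

theorem mem_of_rankCon (hk : 1 ≤ k) (h : rankCon A k u v) {a : A} (ha : a ∈ u) : a ∈ v := by
  obtain ⟨p, q, rfl⟩ := mem_iff_exists_eq_mul_of_mul.1 ha
  obtain ⟨p', q', hv, -, -⟩ := exists_eq_mul_of_mul_of_rankCon_succ (rankCon_mono hk h)
  exact mem_iff_exists_eq_mul_of_mul.2 ⟨p', q', hv⟩

theorem mem_iff_of_rankCon (hk : 1 ≤ k) (h : rankCon A k u v) (a : A) : a ∈ u ↔ a ∈ v :=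
  ⟨mem_of_rankCon hk h, mem_of_rankCon hk ((rankCon A k).symm h)⟩

theorem exists_injective_rankCon_quotient (A : Type) (k : ℕ) :
    ∃ f : (rankCon A (k + 1)).Quotient →ₙ* Bowtie (tripleAction A (rankCon A k).Quotient),
      Function.Injective f :=
  ⟨{ toFun x := x.liftOn (factorisationHom (rankCon A k)) fun _ _ h => h
     map_mul' x y := Con.induction_on₂ x y fun u v =>
       map_mul (factorisationHom (rankCon A k)) u v },
    fun x y => Con.induction_on₂ x y fun _ _ h => (Con.eq _).2 h⟩

instance subsingleton_rankCon_zero_quotient : Subsingleton (rankCon A 0).Quotient :=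
  ⟨fun x y => Con.induction_on₂ x y fun _ _ => (Con.eq _).2 trivial⟩

instance finite_rankCon_quotient (A : Type) [Finite A] : ∀ k, Finite (rankCon A k).Quotient
  | 0 => Finite.of_subsingleton
  | k + 1 =>
    have := finite_rankCon_quotient A k
    have ⟨f, hf⟩ := exists_injective_rankCon_quotient A k
    Finite.of_injective f hf

theorem memSL_rankCon_quotient [Finite A] (k : ℕ) :
    MemSL (k + 1) (rankCon A k).Quotient := by
  induction k with
  | zero => exact ⟨fun _ _ => Subsingleton.elim _ _, fun _ => Subsingleton.elim _ _⟩
  | succ k ih =>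
    obtain ⟨f, hf⟩ := exists_injective_rankCon_quotient A k
    exact ⟨⟨UnionSemilattice ((rankCon A k).Quotient × A × (rankCon A k).Quotient),
        inferInstance, inferInstance⟩, ⟨(rankCon A k).Quotient, inferInstance, inferInstance⟩,
      tripleAction A (rankCon A k).Quotient, UnionSemilattice.isSemilattice _, ih,
      Divides.of_injective f hf⟩

end RankCongruence

section LocalDivisor

open FreeMonoid

/-- The form of aperiodicity appropriate to monoids, where the exponent `0` may be allowed. -/
def IsAperiodicMonoid (M : Type*) [Monoid M] : Prop :=
  ∀ x : M, ∃ n : ℕ, x ^ (n + 1) = x ^ n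

variable {M N : Type*} [Monoid M] [Monoid N]

namespace IsAperiodicMonoid

theorem of_injective (hN : IsAperiodicMonoid N) (f : M →* N) (hf : Function.Injective f) :
    IsAperiodicMonoid M := by
  intro x
  obtain ⟨n, hn⟩ := hN (f x)
  exact ⟨n, hf (by rw [map_pow, map_pow, hn])⟩

theorem of_surjective (hM : IsAperiodicMonoid M) (f : M →* N) (hf : Function.Surjective f) :
    IsAperiodicMonoid N := by
  intro y
  obtain ⟨x, rfl⟩ := hf y
  obtain ⟨n, hn⟩ := hM x
  exact ⟨n, by rw [← map_pow, hn, map_pow]⟩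

theorem eq_one_of_isUnit (hM : IsAperiodicMonoid M) {x : M} (hx : IsUnit x) : x = 1 := by
  obtain ⟨n, hn⟩ := hM x
  rw [pow_succ] at hn
  exact (hx.pow n).mul_eq_left.1 hn

end IsAperiodicMonoid

theorem IsAperiodic.isAperiodicMonoid_withOne {S : Type} [Semigroup S] (hS : IsAperiodic S) :
    IsAperiodicMonoid (WithOne S) := by
  refine WithOne.forall.2 ⟨⟨0, one_pow _⟩, fun s => ?_⟩
  obtain ⟨n, hn, h⟩ := hS s
  exact ⟨n, by rw [← coe_sgPow s hn, ← coe_sgPow s (by omega), h]⟩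

/-- The submonoid of those `m` for which `c * m` lies in `M * c`. -/
def localSubmonoid (c : M) : Submonoid M where
  carrier := {m | ∃ z, c * m = z * c}
  one_mem' := ⟨1, by rw [mul_one, one_mul]⟩
  mul_mem' := by
    rintro a b ⟨y, hy⟩ ⟨z, hz⟩
    exact ⟨y * z, by rw [← mul_assoc, hy, mul_assoc, hz, mul_assoc]⟩

/-- The congruence identifying elements of `localSubmonoid c` that agree after left
multiplication by `c`. -/
def localCon (c : M) : Con (localSubmonoid c) where
  r a b := c * (a : M) = c * b
  iseqv := ⟨fun _ => rfl, Eq.symm, Eq.trans⟩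
  mul' := by
    rintro ⟨a, y, hy⟩ ⟨a', -⟩ ⟨b, -⟩ ⟨b', -⟩ (ha : c * a = c * a') (hb : c * b = c * b')
    calc c * (a * b) = y * (c * b) := by rw [← mul_assoc, hy, mul_assoc]
      _ = c * (a' * b') := by rw [hb, ← mul_assoc, ← hy, ha, mul_assoc]

/-- The local divisor of a monoid `M` at `c`: the set `c * M ∩ M * c` with the multiplication
`(c * a) ∘ (c * b) = c * a * b`, presented as a quotient of a submonoid of `M`. -/
abbrev LocalDivisor (c : M) := (localCon c).Quotient

namespace LocalDivisor

/-- The element `c * a` of `M` underlying the class of `a` in the local divisor. -/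
def val {c : M} (x : LocalDivisor c) : M :=
  x.liftOn (fun a => c * (a : M)) fun _ _ h => h

theorem val_injective (c : M) : Function.Injective (val : LocalDivisor c → M) :=
  fun x y => Con.induction_on₂ x y fun _ _ h => (Con.eq _).2 h

/-- The element of the local divisor with underlying element `c * m * c`. -/
def ofMul (c m : M) : LocalDivisor c :=
  ((⟨m * c, c * m, (mul_assoc c m c).symm⟩ : localSubmonoid c) : (localCon c).Quotient)

theorem val_lift_ofMul (c : M) (w : FreeMonoid M) :
    (lift (ofMul c) w).val = c * lift (· * c) w := by
  let mulRight (m : M) : localSubmonoid c := ⟨m * c, c * m, (mul_assoc c m c).symm⟩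
  calc (lift (ofMul c) w).val = val ((localCon c).mk' (lift mulRight w)) := by
        rw [hom_map_lift]; rfl
    _ = c * (localSubmonoid c).subtype (lift mulRight w) := rfl
    _ = c * lift (· * c) w := by rw [hom_map_lift]; rfl

theorem isAperiodicMonoid (hM : IsAperiodicMonoid M) (c : M) :
    IsAperiodicMonoid (LocalDivisor c) :=
  (hM.of_injective (localSubmonoid c).subtype Subtype.val_injective).of_surjective
    (localCon c).mk' Con.mk'_surjective

instance [Finite M] (c : M) : Finite (LocalDivisor c) :=
  Finite.of_injective val (val_injective c)

theorem card_lt [Finite M] (hM : IsAperiodicMonoid M) {c : M} (hc : c ≠ 1) :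
    Nat.card (LocalDivisor c) < Nat.card M := by
  by_contra! hle
  obtain ⟨x, hx⟩ := ((val_injective c).bijective_of_nat_card_le hle).surjective 1
  obtain ⟨a, rfl⟩ := Con.mk'_surjective x
  exact hc (hM.eq_one_of_isUnit (.of_mul_eq_one (a : M) hx))

end LocalDivisor

end LocalDivisor

section FiniteRank

open FreeMonoid

variable {A : Type} {β γ : Type*} {P : Set A} {c : A}

/-- The values of `f` on `X` depend only on the class of a word modulo one of the congruences
`rankCon A k`, that is, they are definable by first-order sentences when `A` and `β` are finite. -/
def FiniteRankOn (f : FreeMonoid A → β) (X : Set (FreeMonoid A)) : Prop :=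
  ∃ k, ∀ u ∈ X, ∀ v ∈ X, rankCon A k u v → f u = f v

namespace FiniteRankOn

theorem prodMk {f : FreeMonoid A → β} {g : FreeMonoid A → γ} {X : Set (FreeMonoid A)}
    (hf : FiniteRankOn f X) (hg : FiniteRankOn g X) :
    FiniteRankOn (fun w => (f w, g w)) X := by
  obtain ⟨j, hf⟩ := hf
  obtain ⟨k, hg⟩ := hg
  exact ⟨max j k, fun u hu v hv h => Prod.ext
    (hf u hu v hv (rankCon_mono (le_max_left j k) h))
    (hg u hu v hv (rankCon_mono (le_max_right j k) h))⟩

theorem of_split {f : FreeMonoid A → β} (hf : FiniteRankOn f (wordsOver (P \ {c})))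
    (k : ℕ) (hsplit : ∀ u ∈ wordsOver P, c ∈ u → ∃ p q, u = p * of c * q ∧
      ∀ p' q', p' * of c * q' ∈ wordsOver P → rankCon A k p p' → rankCon A k q q' →
        f u = f (p' * of c * q')) :
    FiniteRankOn f (wordsOver P) := by
  obtain ⟨j, hf⟩ := hf
  refine ⟨max j k + 1, fun u hu v hv h => ?_⟩
  by_cases hc : c ∈ u
  · obtain ⟨p, q, rfl, hpq⟩ := hsplit u hu hc
    obtain ⟨p', q', rfl, hp, hq⟩ := exists_eq_mul_of_mul_of_rankCon_succ h
    exact hpq p' q' hv (rankCon_mono (le_max_right j k) hp) (rankCon_mono (le_max_right j k) hq)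
  · have hcv : c ∉ v := (mem_iff_of_rankCon (by omega) h c).not.1 hc
    exact hf u (mem_wordsOver_sdiff hu hc) v (mem_wordsOver_sdiff hv hcv)
      (rankCon_mono (by omega) h)

end FiniteRankOn

end FiniteRank

section Blocks

open FreeMonoid

variable {A M : Type*} [DecidableEq A] [Monoid M] (φ : FreeMonoid A →* M) (c : A)

/-- The values under `φ` of the maximal `c`-free factors of a word, except the last one. -/
def closedBlocks (w : FreeMonoid A) : FreeMonoid M :=
  ofList ((w.toList.splitOn c).dropLast.map fun x => φ (ofList x))

/-- The value under `φ` of the factor of a word after the last occurrence of `c`. -/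
def lastBlock (w : FreeMonoid A) : M :=
  φ (ofList ((w.toList.splitOn c).getLast (List.splitOn_ne_nil c w.toList)))

variable {c} {w : FreeMonoid A}

theorem closedBlocks_of_notMem (hc : c ∉ w) : closedBlocks φ c w = 1 := by
  rw [closedBlocks, List.splitOn_eq_singleton (xs := w.toList) hc]
  rfl

theorem lastBlock_of_notMem (hc : c ∉ w) : lastBlock φ c w = φ w := by
  simp only [lastBlock, List.splitOn_eq_singleton (xs := w.toList) hc]
  rfl

variable (c) (r q : FreeMonoid A)

theorem splitOn_toList_mul_of_mul :
    (r * of c * q).toList.splitOn c = r.toList.splitOn c ++ q.toList.splitOn c := by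
  rw [mul_assoc]
  exact List.splitOn_append_cons_self ..

theorem closedBlocks_mul_of_mul :
    closedBlocks φ c (r * of c * q) =
      closedBlocks φ c r * of (lastBlock φ c r) * closedBlocks φ c q := by
  have hr := List.splitOn_ne_nil c r.toList
  have hq := List.splitOn_ne_nil c q.toList
  rw [closedBlocks, splitOn_toList_mul_of_mul, List.dropLast_append_of_ne_nil hq, List.map_append,
    ofList_append]
  congr 1
  nth_rw 1 [← List.dropLast_append_getLast hr, List.map_append, ofList_append]
  rfl

theorem lastBlock_mul_of_mul : lastBlock φ c (r * of c * q) = lastBlock φ c q := by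
  simp only [lastBlock, splitOn_toList_mul_of_mul]
  rw [List.getLast_append_of_ne_nil]

theorem map_eq_lift_closedBlocks_mul_lastBlock (w : FreeMonoid A) :
    φ w = lift (· * φ (of c)) (closedBlocks φ c w) * lastBlock φ c w := by
  induction w using induction_on_first_occurrence c with
  | free x hx => rw [closedBlocks_of_notMem φ hx, lastBlock_of_notMem φ hx, map_one, one_mul]
  | split x q hx ih =>
    rw [closedBlocks_mul_of_mul, lastBlock_mul_of_mul, closedBlocks_of_notMem φ hx,
      lastBlock_of_notMem φ hx, one_mul, map_mul, map_mul, map_mul, ih, lift_eval_of]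
    simp only [mul_assoc]

theorem map_mul_of_mul_eq_val :
    φ (r * of c * q) =
      φ r * (lift (LocalDivisor.ofMul (φ (of c))) (closedBlocks φ c q)).val * lastBlock φ c q := by
  rw [map_mul, map_mul, map_eq_lift_closedBlocks_mul_lastBlock φ c q, LocalDivisor.val_lift_ofMul]
  simp only [mul_assoc]

variable {φ c} in
theorem exists_eq_mul_of_mul_of_closedBlocks_eq {P Q : FreeMonoid M} {m : M}
    (h : closedBlocks φ c w = P * of m * Q) :
    ∃ r q, w = r * of c * q ∧ closedBlocks φ c r = P ∧ lastBlock φ c r = m ∧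
      closedBlocks φ c q = Q := by
  induction w using induction_on_first_occurrence c generalizing P with
  | free x hx =>
    rw [closedBlocks_of_notMem φ hx] at h
    exact absurd (mem_iff_exists_eq_mul_of_mul.2 ⟨P, Q, h⟩) notMem_one
  | split x q hx ih =>
    rw [closedBlocks_mul_of_mul, closedBlocks_of_notMem φ hx, lastBlock_of_notMem φ hx, one_mul,
      mul_assoc] at h
    obtain ⟨rfl, hQ⟩ | ⟨P', rfl, hP'⟩ := List.cons_eq_append_iff.1 h
    · obtain ⟨rfl, rfl⟩ := List.cons.inj hQ
      exact ⟨x, q, rfl, closedBlocks_of_notMem φ hx, lastBlock_of_notMem φ hx, rfl⟩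
    · obtain ⟨r, q', rfl, hr, rfl, rfl⟩ :=
        ih (P := ofList P') (hP'.trans (mul_assoc (ofList P') _ _).symm)
      refine ⟨x * of c * r, q', by simp only [mul_assoc], ?_, lastBlock_mul_of_mul φ c x r, rfl⟩
      rw [closedBlocks_mul_of_mul, closedBlocks_of_notMem φ hx, lastBlock_of_notMem φ hx, one_mul,
        hr]
      rfl

end Blocks

section Definability

open FreeMonoid

variable {A M : Type} [Monoid M] {φ : FreeMonoid A →* M} {P : Set A} {c : A}

theorem finiteRankOn_lastBlock [DecidableEq A] (hφ : FiniteRankOn φ (wordsOver (P \ {c}))) :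
    FiniteRankOn (lastBlock φ c) (wordsOver P) := by
  have free : FiniteRankOn (lastBlock φ c) (wordsOver (P \ {c})) := by
    obtain ⟨j, hj⟩ := hφ
    refine ⟨j, fun u hu v hv h => ?_⟩
    rw [lastBlock_of_notMem φ (notMem_of_mem_wordsOver_sdiff hu),
      lastBlock_of_notMem φ (notMem_of_mem_wordsOver_sdiff hv), hj u hu v hv h]
  obtain ⟨j, hj⟩ := hφ
  refine free.of_split (j + 1) fun u hu hc => ?_
  obtain ⟨p, q, rfl, hcq⟩ := exists_last_occurrence hc
  refine ⟨p, q, rfl, fun p' q' hv _ hq => ?_⟩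
  have hcq' : c ∉ q' := (mem_iff_of_rankCon (by omega) hq c).not.1 hcq
  obtain ⟨-, -, hqP⟩ := mul_of_mul_mem_wordsOver.1 hu
  obtain ⟨-, -, hqP'⟩ := mul_of_mul_mem_wordsOver.1 hv
  rw [lastBlock_mul_of_mul, lastBlock_mul_of_mul, lastBlock_of_notMem φ hcq,
    lastBlock_of_notMem φ hcq']
  exact hj q (mem_wordsOver_sdiff hqP hcq) q' (mem_wordsOver_sdiff hqP' hcq')
    (rankCon_mono j.le_succ hq)

theorem finiteRankOn_closedBlocks [DecidableEq A] (hφ : FiniteRankOn φ (wordsOver (P \ {c})))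
    (k : ℕ) :
    FiniteRankOn (fun w => (closedBlocks φ c w : (rankCon M k).Quotient)) (wordsOver P) := by
  induction k with
  | zero => exact ⟨0, fun _ _ _ _ _ => Subsingleton.elim _ _⟩
  | succ k ih =>
    obtain ⟨j, hj⟩ := ih.prodMk (finiteRankOn_lastBlock hφ (c := c))
    have hsub : ∀ u ∈ wordsOver P, ∀ v ∈ wordsOver P,
        rankCon A (j + 1) u v → factorisations (rankCon M k) (closedBlocks φ c u) ⊆
          factorisations (rankCon M k) (closedBlocks φ c v) := by
      intro u hu v hv h
      refine factorisations_subset_iff.2 fun B m C huBC => ?_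
      obtain ⟨p, q, rfl, rfl, rfl, rfl⟩ := exists_eq_mul_of_mul_of_closedBlocks_eq huBC
      obtain ⟨p', q', rfl, hp, hq⟩ := exists_eq_mul_of_mul_of_rankCon_succ h
      obtain ⟨hpP, -, hqP⟩ := mul_of_mul_mem_wordsOver.1 hu
      obtain ⟨hpP', -, hqP'⟩ := mul_of_mul_mem_wordsOver.1 hv
      obtain ⟨hB, hm⟩ := Prod.ext_iff.1 (hj p hpP p' hpP' hp)
      obtain ⟨hC, -⟩ := Prod.ext_iff.1 (hj q hqP q' hqP' hq)
      refine ⟨_, _, ?_, (Con.eq _).1 hB, (Con.eq _).1 hC⟩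
      rw [closedBlocks_mul_of_mul, show lastBlock φ c p = lastBlock φ c p' from hm]
    refine ⟨j + 1, fun u hu v hv h => (Con.eq _).2 <| rankCon_succ_iff.2
      ⟨(hsub u hu v hv h).antisymm (hsub v hv u hu ((rankCon A _).symm h)), (Con.eq _).1 ?_⟩⟩
    exact (Prod.ext_iff.1 (hj u hu v hv (rankCon_mono j.le_succ h))).1

theorem FiniteRankOn.of_localDivisor (hφ : FiniteRankOn φ (wordsOver (P \ {c})))
    (hloc : FiniteRankOn (lift (LocalDivisor.ofMul (φ (of c)))) Set.univ) :
    FiniteRankOn φ (wordsOver P) := by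
  classical
  obtain ⟨n, hloc⟩ := hloc
  obtain ⟨j, hj⟩ := hφ
  obtain ⟨k, hk⟩ := (finiteRankOn_closedBlocks ⟨j, hj⟩ n).prodMk (finiteRankOn_lastBlock ⟨j, hj⟩)
  refine .of_split ⟨j, hj⟩ (max j k + 1) fun u hu hc => ?_
  obtain ⟨p, q, rfl, hcp⟩ := exists_first_occurrence hc
  refine ⟨p, q, rfl, fun p' q' hv hp hq => ?_⟩
  have hcp' : c ∉ p' := (mem_iff_of_rankCon (by omega) hp c).not.1 hcp
  obtain ⟨hpP, -, hqP⟩ := mul_of_mul_mem_wordsOver.1 hu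
  obtain ⟨hpP', -, hqP'⟩ := mul_of_mul_mem_wordsOver.1 hv
  have hpp : φ p = φ p' := hj p (mem_wordsOver_sdiff hpP hcp) p'
    (mem_wordsOver_sdiff hpP' hcp') (rankCon_mono (by omega) hp)
  obtain ⟨hclosed, hlast⟩ := Prod.ext_iff.1 (hk q hqP q' hqP' (rankCon_mono (by omega) hq))
  simp only at hlast
  rw [map_mul_of_mul_eq_val, map_mul_of_mul_eq_val, hpp, hlast,
    hloc _ trivial _ trivial ((Con.eq _).1 hclosed)]

theorem finiteRankOn_univ_of_localDivisor [Finite A]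
    (hloc : ∀ c, φ (of c) ≠ 1 →
      FiniteRankOn (lift (LocalDivisor.ofMul (φ (of c)))) Set.univ) :
    FiniteRankOn φ Set.univ := by
  have trivial_letters : FiniteRankOn φ (wordsOver {a | φ (of a) = 1}) :=
    ⟨0, fun u hu v hv _ => (map_eq_one_of_mem_wordsOver (fun _ => id) hu).trans
      (map_eq_one_of_mem_wordsOver (fun _ => id) hv).symm⟩
  have all_letters : FiniteRankOn φ (wordsOver ({a | φ (of a) ≠ 1} ∪ {a | φ (of a) = 1})) := by
    refine Set.Finite.induction_on_subset
      (motive := fun Q _ => FiniteRankOn φ (wordsOver (Q ∪ {a | φ (of a) = 1})))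
      {a | φ (of a) ≠ 1} (Set.toFinite _) (by rwa [Set.empty_union]) ?_
    intro c Q hc _ hcQ ih
    refine .of_localDivisor (c := c) ?_ (hloc c hc)
    rwa [Set.insert_union, Set.insert_sdiff_self_of_notMem fun h => h.elim hcQ hc]
  obtain ⟨k, hk⟩ := all_letters
  exact ⟨k, fun u _ v _ => hk u (fun _ _ => ne_or_eq _ _) v fun _ _ => ne_or_eq _ _⟩

theorem finiteRankOn_univ {A M : Type} [Finite A] [Monoid M] [Finite M]
    (hM : IsAperiodicMonoid M) (φ : FreeMonoid A →* M) : FiniteRankOn φ Set.univ :=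
  finiteRankOn_univ_of_localDivisor fun c hc =>
    have : Nat.card (LocalDivisor (φ (of c))) < Nat.card M := LocalDivisor.card_lt hM hc
    finiteRankOn_univ (LocalDivisor.isAperiodicMonoid hM _) _
termination_by Nat.card M

end Definability

theorem divides_rankCon_quotient {S : Type} [Semigroup S] {k : ℕ}
    (hk : ∀ u v, rankCon S k u v →
      FreeMonoid.lift ((↑) : S → WithOne S) u = FreeMonoid.lift (↑) v) :
    Divides S (rankCon S k).Quotient := by
  have hlift : (FreeMonoid.lift ((↑) : S → WithOne S)).toMulHom.comp FreeSemigroup.toFreeMonoid =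
      WithOne.coeMulHom.comp (FreeSemigroup.lift id) := FreeSemigroup.hom_ext rfl
  refine divides_of_forall_eq
    ((rankCon S k).mk'.toMulHom.comp FreeSemigroup.toFreeMonoid) (FreeSemigroup.lift id)
    (fun s => ⟨.of s, FreeSemigroup.lift_of id s⟩) fun x y hxy => WithOne.coe_injective ?_
  exact (DFunLike.congr_fun hlift x).symm.trans
    ((hk _ _ ((Con.eq _).1 hxy)).trans (DFunLike.congr_fun hlift y))

/-- A finite semigroup is aperiodic if and only if it lies in `SL^k`
for some `k ≥ 1`. -/
theorem aperiodic_iff_mem_SL (S : Type) [Semigroup S] [Finite S] :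
    IsAperiodic S ↔ ∃ k, 1 ≤ k ∧ MemSL k S := by
  constructor
  · intro hS
    have : Finite (WithOne S) := inferInstanceAs (Finite (Option S))
    obtain ⟨k, hk⟩ := finiteRankOn_univ hS.isAperiodicMonoid_withOne
      (FreeMonoid.lift ((↑) : S → WithOne S))
    have hdiv : Divides S (rankCon S k).Quotient :=
      divides_rankCon_quotient fun u v => hk u trivial v trivial
    exact ⟨k + 1, by omega, (memSL_rankCon_quotient k).of_divides hdiv⟩
  · rintro ⟨k, -, hk⟩
    exact isAperiodic_of_SL k _ hk
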